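/- Let L = ℚ(ω, θ) where ω = e^{2πi/3} and θ = ζ₂₈ + ζ₂₈⁻¹ = 2cos(π/14), a degree-12 number field with ring of integers O_L = ℤ[ω][θ]. There exist exactly two distinct prime ideals I and J of O_L lying above the rational prime 7; each has ramification index 6 and residue degree 1 (so absolute norm 7), the factorization 7·O_L = I⁶ · J⁶ holds, and I (equivalently J) is not a principal ideal. -/

import Mathlib

noncomputable section

open Complex

/-- `ω = e^{2πi/3}`, the primitive cube root of unity. -/
def om : ℂ := Complex.exp (2 * Real.pi * Complex.I / 3)

/-- `θ = ζ₂₈ + ζ₂₈⁻¹ = 2cos(π/14)`. -/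
def t28 : ℂ := 2 * Real.cos (Real.pi / 14)

/-- The ring of integers `O_L = ℤ[ω][θ]` of the degree-12 number field
`L = ℚ(ω, θ)`, realized as the subring of `ℂ` generated by `ω` and `θ`. -/
def OL28 : Subring ℂ := Subring.closure {om, t28}

open Polynomial in
/-- The minimal polynomial of `θ`. -/
def F28 : ℤ[X] := X ^ 6 - 7 * X ^ 4 + 14 * X ^ 2 - 7

open Polynomial in
lemma F28_natDegree : F28.natDegree = 6 := by
  unfold F28; compute_degree!

open Polynomial in
lemma F28_monic : F28.Monic := by
  unfold F28; monicity!

open Polynomial in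
lemma F28_irr : Irreducible F28 := by
  have h7 : (Ideal.span {(7 : ℤ)}).IsPrime := by
    rw [Ideal.span_singleton_prime (by norm_num)]
    exact Int.prime_iff_natAbs_prime.2 (by norm_num)
  refine irreducible_of_eisenstein_criterion h7 ?_ ?_ ?_ ?_ F28_monic.isPrimitive
  · rw [F28_monic.leadingCoeff, Ideal.mem_span_singleton]; norm_num
  · intro n hn
    rw [degree_eq_natDegree F28_monic.ne_zero, F28_natDegree] at hn
    have hn : n < 6 := by exact_mod_cast hn
    rw [Ideal.mem_span_singleton]
    have e7 : (7 : ℤ[X]) = C 7 := rfl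
    have e14 : (14 : ℤ[X]) = C 14 := rfl
    unfold F28
    rw [e7, e14]
    simp only [coeff_sub, coeff_add, coeff_C_mul, coeff_X_pow, coeff_C]
    interval_cases n <;> norm_num
  · rw [degree_eq_natDegree F28_monic.ne_zero, F28_natDegree]; norm_num
  · rw [Ideal.span_singleton_pow, Ideal.mem_span_singleton, coeff_zero_eq_eval_zero]
    simp [F28]

lemma t28_poly : t28 ^ 6 - 7 * t28 ^ 4 + 14 * t28 ^ 2 - 7 = 0 := by
  have h0 : Real.cos (7 * (Real.pi / 14)) = 0 := by
    rw [show 7 * (Real.pi / 14) = Real.pi / 2 by ring, Real.cos_pi_div_two]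
  have hpos : 0 < Real.cos (Real.pi / 14) :=
    Real.cos_pos_of_mem_Ioo ⟨by linarith [Real.pi_pos], by linarith [Real.pi_pos]⟩
  unfold t28
  generalize Real.pi / 14 = x at *
  have h1 := Real.cos_add (4 * x) (3 * x)
  have h2 := Real.cos_sub (4 * x) (3 * x)
  have h3 := Real.cos_three_mul x
  have h4 : Real.cos (4 * x) = 2 * (2 * Real.cos x ^ 2 - 1) ^ 2 - 1 := by
    rw [show 4 * x = 2 * (2 * x) by ring, Real.cos_two_mul, Real.cos_two_mul]
  rw [show 4 * x + 3 * x = 7 * x by ring] at h1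
  rw [show 4 * x - 3 * x = x by ring] at h2
  rw [h3, h4] at h1 h2
  have h5 : Real.cos x * ((2 * Real.cos x) ^ 6 - 7 * (2 * Real.cos x) ^ 4
      + 14 * (2 * Real.cos x) ^ 2 - 7) = 0 := by
    linear_combination h0 - h1 - h2
  have h6 := (mul_eq_zero.1 h5).resolve_left hpos.ne'
  exact_mod_cast h6

open Polynomial in
lemma t28_aeval : aeval t28 F28 = 0 := by
  have h := t28_poly
  simpa only [F28, map_sub, map_add, map_mul, map_pow, aeval_X, map_ofNat] using h

open Polynomial in
lemma F28_dvd (p : ℤ[X]) (hp : aeval t28 p = 0) : F28 ∣ p := by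
  have hi : IsIntegral ℤ t28 := ⟨F28, F28_monic, t28_aeval⟩
  have h1 := minpoly.isIntegrallyClosed_dvd hi t28_aeval
  have h2 := minpoly.isIntegrallyClosed_dvd hi hp
  have h3 : Associated (minpoly ℤ t28) F28 :=
    (minpoly.irreducible hi).associated_of_dvd F28_irr h1
  exact h3.symm.dvd.trans h2

lemma ivt28 (a b : ℝ) (hab : a < b)
    (h : (a ^ 6 - 7 * a ^ 4 + 14 * a ^ 2 - 7) * (b ^ 6 - 7 * b ^ 4 + 14 * b ^ 2 - 7) < 0) :
    ∃ x, a < x ∧ x < b ∧ x ^ 6 - 7 * x ^ 4 + 14 * x ^ 2 - 7 = 0 := by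
  have hc : ContinuousOn (fun x : ℝ => x ^ 6 - 7 * x ^ 4 + 14 * x ^ 2 - 7) (Set.Icc a b) := by
    fun_prop
  rcases mul_neg_iff.1 h with ⟨h1, h2⟩ | ⟨h1, h2⟩
  · obtain ⟨x, hx, hx'⟩ := intermediate_value_Ioo' hab.le hc ⟨h2, h1⟩
    exact ⟨x, hx.1, hx.2, hx'⟩
  · obtain ⟨x, hx, hx'⟩ := intermediate_value_Ioo hab.le hc ⟨h1, h2⟩
    exact ⟨x, hx.1, hx.2, hx'⟩

open Polynomial in
/-- All the roots of `F28` are real. -/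
lemma F28_roots : ∃ s : Multiset ℝ,
    F28.map (Int.castRingHom ℝ) = (s.map fun r => X - C r).prod ∧ s.prod = -7 := by
  obtain ⟨a, ha1, ha2, ha⟩ := ivt28 0 1 (by norm_num) (by norm_num)
  obtain ⟨b, hb1, hb2, hb⟩ := ivt28 (3/2) (7/4) (by norm_num) (by norm_num)
  obtain ⟨c, hc1, hc2, hc⟩ := ivt28 (7/4) 2 (by norm_num) (by norm_num)
  have hab : a ^ 2 - b ^ 2 ≠ 0 := by nlinarith
  have hac : a ^ 2 - c ^ 2 ≠ 0 := by nlinarith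
  have hbc : b ^ 2 - c ^ 2 ≠ 0 := by nlinarith
  have h1 : a ^ 4 + a ^ 2 * b ^ 2 + b ^ 4 - 7 * (a ^ 2 + b ^ 2) + 14 = 0 := by
    apply mul_left_cancel₀ hab; linear_combination ha - hb
  have h2 : a ^ 4 + a ^ 2 * c ^ 2 + c ^ 4 - 7 * (a ^ 2 + c ^ 2) + 14 = 0 := by
    apply mul_left_cancel₀ hac; linear_combination ha - hc
  have e1 : a ^ 2 + b ^ 2 + c ^ 2 = 7 := by
    apply mul_left_cancel₀ hbc; linear_combination h1 - h2
  have e2 : a ^ 2 * b ^ 2 + a ^ 2 * c ^ 2 + b ^ 2 * c ^ 2 = 14 := by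
    linear_combination (a ^ 2 + b ^ 2) * e1 - h1
  have e3 : a ^ 2 * b ^ 2 * c ^ 2 = 7 := by
    linear_combination ha + (a ^ 2) * e2 - a ^ 4 * e1
  refine ⟨{a, -a, b, -b, c, -c}, ?_, ?_⟩
  · have c1 := congrArg (C : ℝ → ℝ[X]) e1
    have c2 := congrArg (C : ℝ → ℝ[X]) e2
    have c3 := congrArg (C : ℝ → ℝ[X]) e3
    have k7 : (C 7 : ℝ[X]) = 7 := rfl
    have k14 : (C 14 : ℝ[X]) = 14 := rfl
    simp only [C_add, C_mul, C_pow, k7, k14] at c1 c2 c3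
    simp [F28]
    linear_combination X ^ 4 * c1 - X ^ 2 * c2 + c3
  · simp
    linear_combination e3

open Polynomial in
lemma F28_norm (s : Multiset ℝ)
    (hs : F28.map (Int.castRingHom ℝ) = (s.map fun r => X - C r).prod) (f : ℤ[X]) :
    ∃ n : ℤ, (n : ℝ) = (s.map fun r => aeval r f).prod ∧
      (n : ZMod 7) = (f.eval 0 : ℤ) ^ 6 := by
  refine ⟨resultant F28 f 6 f.natDegree, ?_, ?_⟩
  · have h := resultant_map_map F28 f 6 f.natDegree (Int.castRingHom ℝ)
    have hsp : (F28.map (Int.castRingHom ℝ)).Splits := by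
      rw [hs]
      apply Splits.multisetProd
      intro p hp
      obtain ⟨r, -, rfl⟩ := Multiset.mem_map.1 hp
      exact Splits.X_sub_C r
    have h2 := resultant_eq_prod_eval _ (f.map (Int.castRingHom ℝ)) f.natDegree
      natDegree_map_le hsp
    rw [F28_monic.natDegree_map, F28_natDegree, h] at h2
    have h3 := F28_monic.map (Int.castRingHom ℝ)
    rw [h3.leadingCoeff, hs, roots_multiset_prod_X_sub_C, one_pow, one_mul] at h2
    simp only [eq_intCast] at h2
    rw [h2]
    congr 1
    apply Multiset.map_congr rfl
    intro r _
    rw [eval_map, aeval_def]; rfl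
  · have : Fact (Nat.Prime 7) := ⟨by norm_num⟩
    have h := resultant_map_map F28 f 6 f.natDegree (Int.castRingHom (ZMod 7))
    have hs : F28.map (Int.castRingHom (ZMod 7)) = X ^ 6 := by
      have k7 : (7 : (ZMod 7)[X]) = 0 := by
        rw [show (7 : (ZMod 7)[X]) = C 7 from rfl, show (7 : ZMod 7) = 0 from rfl, C_0]
      simp [F28, k7]
      rw [show (14 : (ZMod 7)[X]) = C 14 from rfl, show (14 : ZMod 7) = 0 from rfl, C_0]
    have hsp : (X ^ 6 : (ZMod 7)[X]).Splits := Splits.X.pow 6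
    have h2 := resultant_eq_prod_eval _ (f.map (Int.castRingHom (ZMod 7))) f.natDegree
      natDegree_map_le hsp
    rw [hs] at h
    rw [natDegree_X_pow, h] at h2
    simp only [eq_intCast] at h2
    rw [h2]
    rw [roots_X_pow, Multiset.nsmul_singleton]
    simp [← coeff_zero_eq_eval_zero]
    ring

open Polynomial in
lemma no_tot_pos (g h e n : ℤ[X])
    (h1 : aeval t28 (g ^ 2 - g * h + h ^ 2) = t28 * aeval t28 e)
    (h2 : aeval t28 e * aeval t28 n = 1) : False := by
  obtain ⟨s, hs, hs7⟩ := F28_roots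
  have hr : ∀ r ∈ s, ∀ p : ℤ[X], aeval t28 p = 0 → aeval r p = 0 := by
    intro r hr p hp
    obtain ⟨q, rfl⟩ := F28_dvd p hp
    have : aeval r F28 = 0 := by
      have : (F28.map (Int.castRingHom ℝ)).eval r = 0 := by
        rw [hs, eval_multiset_prod, Multiset.prod_eq_zero_iff]
        simp only [Multiset.map_map, Multiset.mem_map]
        exact ⟨r, hr, by simp⟩
      rw [eval_map] at this
      rw [aeval_def]; exact this
    rw [map_mul, this, zero_mul]
  obtain ⟨ne, hne, hne'⟩ := F28_norm s hs e
  obtain ⟨nn, hnn, -⟩ := F28_norm s hs n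
  have hu : (ne : ℝ) * nn = 1 := by
    rw [hne, hnn, ← Multiset.prod_map_mul]
    apply Multiset.prod_eq_one
    intro x hx
    obtain ⟨r, hrs, rfl⟩ := Multiset.mem_map.1 hx
    have := hr r hrs (e * n - 1) (by simp [h2])
    simp only [map_sub, map_mul, map_one] at this
    linarith
  have hu' : ne * nn = 1 := by exact_mod_cast hu
  have hpos : 0 ≤ (s.map fun r => aeval r (X * e)).prod := by
    apply Multiset.prod_nonneg
    intro x hx
    obtain ⟨r, hrs, rfl⟩ := Multiset.mem_map.1 hx
    have := hr r hrs (g ^ 2 - g * h + h ^ 2 - X * e) (by rw [map_sub, h1]; simp)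
    simp only [map_sub, map_mul, map_add, map_pow] at this
    rw [map_mul]
    nlinarith [sq_nonneg (aeval r g - aeval r h), sq_nonneg (aeval r g), sq_nonneg (aeval r h)]
  simp only [map_mul, aeval_X, Multiset.prod_map_mul, Multiset.map_id', hs7, ← hne] at hpos
  rcases Int.eq_one_or_neg_one_of_mul_eq_one hu' with h | h
  · rw [h] at hpos; norm_num at hpos
  · rw [h] at hne'
    have : ∀ a : ZMod 7, ((-1 : ℤ) : ZMod 7) ≠ a ^ 6 := by decide
    exact this _ hne'

lemma om_eq : om = ⟨-1 / 2, √3 / 2⟩ := by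
  have h : om = Complex.exp (((2 * Real.pi / 3 : ℝ) : ℂ) * Complex.I) := by
    unfold om; congr 1; push_cast; ring
  have e : 2 * Real.pi / 3 = Real.pi - Real.pi / 3 := by ring
  rw [h, Complex.exp_mul_I, ← Complex.ofReal_cos, ← Complex.ofReal_sin, e, Real.cos_pi_sub,
    Real.sin_pi_sub, Real.cos_pi_div_three, Real.sin_pi_div_three]
  apply Complex.ext <;> simp
  norm_num

lemma om_sq : om ^ 2 + om + 1 = 0 := by
  have h3 : √3 * √3 = 3 := Real.mul_self_sqrt (by norm_num)
  rw [om_eq, sq]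
  apply Complex.ext <;> simp
  · linarith
  · ring

lemma om_conj : (starRingEnd ℂ) om = -1 - om := by
  rw [om_eq]
  apply Complex.ext <;> simp
  norm_num

lemma t28_conj : (starRingEnd ℂ) t28 = t28 := by
  have : t28 = ((2 * Real.cos (Real.pi / 14) : ℝ) : ℂ) := by unfold t28; push_cast; rfl
  rw [this, Complex.conj_ofReal]

lemma om_mem : om ∈ OL28 := Subring.subset_closure (by simp)

lemma t28_mem : t28 ∈ OL28 := Subring.subset_closure (by simp)

open Polynomial in
lemma aeval_conj (p : ℤ[X]) : (starRingEnd ℂ) (aeval t28 p) = aeval t28 p := by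
  rw [aeval_def, hom_eval₂, t28_conj]
  congr 1
  ext; simp

open Polynomial in
lemma OL28_rep (x : ℂ) (hx : x ∈ OL28) :
    ∃ g h : ℤ[X], x = aeval t28 g + om * aeval t28 h := by
  induction hx using Subring.closure_induction with
  | mem x hx =>
    rcases hx with rfl | rfl
    · exact ⟨0, 1, by simp⟩
    · exact ⟨X, 0, by simp⟩
  | zero => exact ⟨0, 0, by simp⟩
  | one => exact ⟨1, 0, by simp⟩
  | add x y _ _ hx hy =>
    obtain ⟨g, h, rfl⟩ := hx
    obtain ⟨g', h', rfl⟩ := hy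
    exact ⟨g + g', h + h', by simp only [map_add]; ring⟩
  | neg x _ hx =>
    obtain ⟨g, h, rfl⟩ := hx
    exact ⟨-g, -h, by simp only [map_neg]; ring⟩
  | mul x y _ _ hx hy =>
    obtain ⟨g, h, rfl⟩ := hx
    obtain ⟨g', h', rfl⟩ := hy
    refine ⟨g * g' - h * h', g * h' + h * g' - h * h', ?_⟩
    simp only [map_add, map_sub, map_mul]
    linear_combination (aeval t28 h * aeval t28 h') * om_sq

lemma conj_mem (x : ℂ) (hx : x ∈ OL28) : (starRingEnd ℂ) x ∈ OL28 := by
  have : OL28 ≤ OL28.comap (starRingEnd ℂ) := by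
    unfold OL28
    rw [Subring.closure_le]
    rintro x (rfl | rfl)
    · change (starRingEnd ℂ) om ∈ OL28
      rw [om_conj]
      exact sub_mem (neg_mem (one_mem _)) om_mem
    · change (starRingEnd ℂ) t28 ∈ OL28
      rw [t28_conj]
      exact t28_mem
  exact this hx

/-- Complex conjugation on `O_L`. -/
def cj : ↥OL28 →+* ↥OL28 := (starRingEnd ℂ).restrict OL28 OL28 conj_mem

lemma cj_coe (x : ↥OL28) : ((cj x : ↥OL28) : ℂ) = (starRingEnd ℂ) (x : ℂ) := rfl

/-- `θ` as an element of `O_L`. -/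
def TT : ↥OL28 := ⟨t28, t28_mem⟩

/-- `ω` as an element of `O_L`. -/
def WW : ↥OL28 := ⟨om, om_mem⟩

lemma cj_TT : cj TT = TT := Subtype.ext t28_conj

lemma cj_WW : cj WW = -1 - WW := Subtype.ext om_conj

lemma WW_sq : WW ^ 2 + WW + 1 = 0 := Subtype.ext om_sq

lemma cj_cj (x : ↥OL28) : cj (cj x) = x := Subtype.ext (by simp [cj_coe])

lemma TT_ne : TT ≠ 0 := by
  intro h
  have h1 : t28 = 0 := congrArg Subtype.val h
  have := t28_poly
  rw [h1] at this
  norm_num at this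

lemma TT_poly : TT ^ 6 - 7 * TT ^ 4 + 14 * TT ^ 2 - 7 = 0 := Subtype.ext t28_poly

lemma TT_seven : TT ^ 6 = 7 * (TT ^ 2 - 1) ^ 2 := by
  linear_combination TT_poly

/-- `7 = θ⁶ u²` for a unit `u`. -/
lemma seven_TT : (7 : ↥OL28) = TT ^ 6 * (TT ^ 4 - 6 * TT ^ 2 + 8) ^ 2 := by
  have h : (TT ^ 2 - 1) * (TT ^ 4 - 6 * TT ^ 2 + 8) = -1 := by
    linear_combination TT_poly
  have h2 : ((TT ^ 2 - 1) * (TT ^ 4 - 6 * TT ^ 2 + 8)) ^ 2 = 1 := by rw [h]; norm_num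
  rw [TT_seven]
  linear_combination -7 * h2

open Polynomial in
lemma real_rep (x : ↥OL28) (hx : cj x = x) : ∃ g : ℤ[X], (x : ℂ) = aeval t28 g := by
  obtain ⟨g, h, e⟩ := OL28_rep x x.2
  refine ⟨g, ?_⟩
  have h1 : (starRingEnd ℂ) (x : ℂ) = x := congrArg Subtype.val hx
  rw [e, map_add, map_mul, aeval_conj, aeval_conj, om_conj] at h1
  have h2 : (-1 - 2 * om) * aeval t28 h = 0 := by linear_combination h1
  have h3 : (-1 - 2 * om) ≠ 0 := by
    intro h
    have h4 : (-1 - 2 * om) ^ 2 = -3 := by linear_combination 4 * om_sq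
    rw [h] at h4
    norm_num at h4
  rw [e, (mul_eq_zero.1 h2).resolve_left h3]
  simp

/-- `θ` is not a unit. -/
lemma TT_not_unit (c : ↥OL28) (h : TT * c = 1) : False := by
  have hc : cj c = c := by
    have h1 := congrArg cj h
    rw [map_mul, cj_TT, map_one] at h1
    exact mul_left_cancel₀ TT_ne (h1.trans h.symm)
  obtain ⟨g, hg⟩ := real_rep c hc
  have h1 : t28 * (c : ℂ) = 1 := congrArg Subtype.val h
  rw [hg] at h1
  obtain ⟨q, hq⟩ := F28_dvd (Polynomial.X * g - 1) (by simp [h1])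
  have := congrArg (Polynomial.eval 0) hq
  simp [F28] at this
  omega

/-- No element `a` of `O_L` has `a ā` equal to `θ` up to a unit. -/
lemma no_norm_TT (a e n : ↥OL28) (h1 : a * cj a = TT * e) (h2 : TT = a * cj a * n) : False := by
  have h3 : e * n = 1 := by
    apply mul_left_cancel₀ TT_ne
    rw [mul_one, ← mul_assoc, ← h1, ← h2]
  have he : cj e = e := by
    have h := congrArg cj h1
    rw [map_mul, map_mul, cj_cj, cj_TT] at h
    apply mul_left_cancel₀ TT_ne
    rw [← h, ← h1, mul_comm]
  have hn : cj n = n := by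
    have h := congrArg cj h3
    rw [map_mul, he, map_one] at h
    have he0 : e ≠ 0 := by rintro rfl; simp at h3
    exact mul_left_cancel₀ he0 (h.trans h3.symm)
  obtain ⟨g, h, hgh⟩ := OL28_rep a a.2
  obtain ⟨e', he'⟩ := real_rep e he
  obtain ⟨n', hn'⟩ := real_rep n hn
  apply no_tot_pos g h e' n'
  · rw [← he']
    have k : (a : ℂ) * (starRingEnd ℂ) (a : ℂ) = t28 * e := congrArg Subtype.val h1
    rw [← k, hgh]
    simp only [map_add, map_sub, map_mul, map_pow, aeval_conj, om_conj]
    linear_combination (Polynomial.aeval t28 h) ^ 2 * om_sq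
  · rw [← he', ← hn']
    exact congrArg Subtype.val h3

section gen

variable (W W' : ↥OL28)

lemma gen_ne_top (h1 : W + W' = -1) (h2 : W * W' = 1) (hc : cj W = W') :
    Ideal.span {3 + W, TT} ≠ ⊤ := by
  intro h
  rw [Ideal.eq_top_iff_one, Ideal.mem_span_pair] at h
  obtain ⟨a, b, h⟩ := h
  have h' := congrArg cj h
  simp only [map_add, map_mul, cj_TT, hc, map_one, map_ofNat] at h'
  have hp : (3 + W) * (3 + W') = 7 := by linear_combination 3 * h1 + h2
  apply TT_not_unit (TT ^ 5 * (TT ^ 4 - 6 * TT ^ 2 + 8) ^ 2 * (a * cj a) + a * (3 + W) * cj b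
    + b * (cj a * (3 + W') + cj b * TT))
  have : (a * (3 + W) + b * TT) * (cj a * (3 + W') + cj b * TT) = 1 := by rw [h, h', one_mul]
  linear_combination this - a * cj a * hp - a * cj a * seven_TT

lemma gen_not_principal (h1 : W + W' = -1) (h2 : W * W' = 1) (hc : cj W = W') :
    ¬ (Ideal.span {3 + W, TT}).IsPrincipal := by
  rintro ⟨⟨α, hα⟩⟩
  rw [Ideal.submodule_span_eq] at hα
  have hp : (3 + W) * (3 + W') = 7 := by linear_combination 3 * h1 + h2
  have m1 : 3 + W ∈ Ideal.span {α} := hα ▸ Ideal.subset_span (by simp)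
  have m2 : TT ∈ Ideal.span {α} := hα ▸ Ideal.subset_span (by simp)
  have m3 : α ∈ Ideal.span {3 + W, TT} := hα ▸ Ideal.mem_span_singleton_self α
  obtain ⟨c, hc1⟩ := Ideal.mem_span_singleton.1 m1
  obtain ⟨d, hd⟩ := Ideal.mem_span_singleton.1 m2
  obtain ⟨a, b, h⟩ := Ideal.mem_span_pair.1 m3
  have h' := congrArg cj h
  have hc' := congrArg cj hc1
  have hd' := congrArg cj hd
  simp only [map_add, map_mul, cj_TT, hc, map_ofNat] at h' hc' hd'
  refine no_norm_TT α (TT ^ 5 * (TT ^ 4 - 6 * TT ^ 2 + 8) ^ 2 * (a * cj a) + a * (3 + W) * cj b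
    + b * (cj a * (3 + W') + cj b * TT)) (3 * (c * cj d) + 3 * (d * cj c)
      - 2 * (3 + W) * (d * cj c)) ?_ ?_
  · rw [← h', ← h]
    linear_combination a * cj a * hp + a * cj a * seven_TT
  · have q1 : (3 + W) * TT = α * cj α * (c * cj d) := by
      rw [hc1]; nth_rewrite 1 [hd']; ring
    have q2 : (3 + W') * TT = α * cj α * (d * cj c) := by
      rw [hc']; nth_rewrite 1 [hd]; ring
    linear_combination 3 * q1 + 3 * q2 - 2 * (3 + W) * q2 - TT * (3 * h1 - 2 * hp)

lemma gen_surj (P : Ideal ↥OL28) (hW : ∃ n : ℤ, WW - n ∈ P) (hT : TT ∈ P) (x : ↥OL28) :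
    ∃ n : ℤ, x - n ∈ P := by
  obtain ⟨x, hx⟩ := x
  suffices h : ∃ (hx : x ∈ OL28) (n : ℤ), (⟨x, hx⟩ : ↥OL28) - n ∈ P from h.2
  induction hx using Subring.closure_induction with
  | mem x hx =>
    rcases hx with rfl | rfl
    · exact ⟨om_mem, hW⟩
    · exact ⟨t28_mem, 0, by rw [Int.cast_zero, sub_zero]; exact hT⟩
  | zero => exact ⟨zero_mem _, 0, by
      have : (⟨0, zero_mem _⟩ : ↥OL28) = 0 := rfl
      simp [this]⟩
  | one => exact ⟨one_mem _, 1, by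
      have : (⟨1, one_mem _⟩ : ↥OL28) = 1 := rfl
      simp [this]⟩
  | add x y _ _ hx hy =>
    obtain ⟨hx, n, hn⟩ := hx
    obtain ⟨hy, m, hm⟩ := hy
    refine ⟨add_mem hx hy, n + m, ?_⟩
    convert P.add_mem hn hm using 1
    have : (⟨x + y, add_mem hx hy⟩ : ↥OL28) = ⟨x, hx⟩ + ⟨y, hy⟩ := rfl
    rw [this]; push_cast; ring
  | neg x _ hx =>
    obtain ⟨hx, n, hn⟩ := hx
    refine ⟨neg_mem hx, -n, ?_⟩
    convert P.neg_mem hn using 1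
    have : (⟨-x, neg_mem hx⟩ : ↥OL28) = -⟨x, hx⟩ := rfl
    rw [this]; push_cast; ring
  | mul x y _ _ hx hy =>
    obtain ⟨hx, n, hn⟩ := hx
    obtain ⟨hy, m, hm⟩ := hy
    refine ⟨mul_mem hx hy, n * m, ?_⟩
    convert P.add_mem (P.mul_mem_right ⟨y, hy⟩ hn) (P.mul_mem_left (n : ↥OL28) hm) using 1
    have : (⟨x * y, mul_mem hx hy⟩ : ↥OL28) = ⟨x, hx⟩ * ⟨y, hy⟩ := rfl
    rw [this]; push_cast; ring

lemma seven_mem (P : Ideal ↥OL28) (hT : TT ∈ P) : (7 : ↥OL28) ∈ P := by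
  rw [seven_TT]
  exact P.mul_mem_right _ (P.pow_mem_of_mem hT 6 (by norm_num))

lemma gen_field (P : Ideal ↥OL28) (hP : P ≠ ⊤) (hW : ∃ n : ℤ, WW - n ∈ P) (hT : TT ∈ P) :
    P.IsMaximal ∧ Nat.card (↥OL28 ⧸ P) = 7 := by
  have : Fact (Nat.Prime 7) := ⟨by norm_num⟩
  have hnt : Nontrivial (↥OL28 ⧸ P) := Ideal.Quotient.nontrivial_iff.2 hP
  have h7 : ((7 : ℕ) : ↥OL28 ⧸ P) = 0 := by
    have := Ideal.Quotient.eq_zero_iff_mem.2 (seven_mem P hT)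
    rw [map_ofNat] at this
    exact_mod_cast this
  have hch : CharP (↥OL28 ⧸ P) 7 :=
    (CharP.charP_iff_prime_eq_zero (by norm_num)).2 h7
  let φ : ZMod 7 →+* ↥OL28 ⧸ P := ZMod.castHom (dvd_refl 7) _
  have hφ : Function.Bijective φ := by
    refine ⟨φ.injective, ?_⟩
    intro y
    obtain ⟨x, rfl⟩ := Ideal.Quotient.mk_surjective y
    obtain ⟨n, hn⟩ := gen_surj P hW hT x
    refine ⟨n, ?_⟩
    rw [map_intCast]
    have := (Ideal.Quotient.mk_eq_mk_iff_sub_mem x n).2 hn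
    rw [this, map_intCast]
  let ψ := RingEquiv.ofBijective φ hφ
  refine ⟨?_, ?_⟩
  · apply Ideal.Quotient.maximal_of_isField
    exact ψ.symm.toMulEquiv.isField (Field.toIsField _)
  · rw [← Nat.card_congr ψ.toEquiv, Nat.card_zmod]

end gen

/-- In `O_L = ℤ[ω][ζ₂₈ + ζ₂₈⁻¹]` there are exactly two distinct prime ideals lying
above the rational prime `7`; each has residue degree `1` (absolute norm `7`) and
ramification index `6`, so that `7·O_L = I⁶·J⁶`, and neither is principal. -/
theorem stmt19 :
    ∃ P Q : Ideal ↥OL28, P.IsPrime ∧ Q.IsPrime ∧ P ≠ Q ∧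
      (7 : ↥OL28) ∈ P ∧ (7 : ↥OL28) ∈ Q ∧
      (∀ R : Ideal ↥OL28, R.IsPrime → (7 : ↥OL28) ∈ R → R = P ∨ R = Q) ∧
      Nat.card (↥OL28 ⧸ P) = 7 ∧ Nat.card (↥OL28 ⧸ Q) = 7 ∧
      Ideal.span {(7 : ↥OL28)} = P ^ 6 * Q ^ 6 ∧
      ¬ P.IsPrincipal ∧ ¬ Q.IsPrincipal := by
  set W := WW with hWdef
  set W' := -1 - WW with hW'def
  have hsq := WW_sq
  have h1 : W + W' = -1 := by rw [hW'def]; ring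
  have h2 : W * W' = 1 := by rw [hW'def]; linear_combination -hsq
  have h1' : W' + W = -1 := by rw [add_comm]; exact h1
  have h2' : W' * W = 1 := by rw [mul_comm]; exact h2
  have hc : cj W = W' := cj_WW
  have hc' : cj W' = W := by rw [← hc, cj_cj]
  have hp : (3 + W) * (3 + W') = 7 := by linear_combination 3 * h1 + h2
  have p1 : 3 + W ∈ Ideal.span {3 + W, TT} := Ideal.subset_span (by simp)
  have p2 : TT ∈ Ideal.span {3 + W, TT} := Ideal.subset_span (by simp)
  have q1 : 3 + W' ∈ Ideal.span {3 + W', TT} := Ideal.subset_span (by simp)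
  have q2 : TT ∈ Ideal.span {3 + W', TT} := Ideal.subset_span (by simp)
  have tP := gen_ne_top W W' h1 h2 hc
  have tQ := gen_ne_top W' W h1' h2' hc'
  have nP := gen_not_principal W W' h1 h2 hc
  have nQ := gen_not_principal W' W h1' h2' hc'
  have hmul : Ideal.span {3 + W, TT} * Ideal.span {3 + W', TT} = Ideal.span {TT} := by
    apply le_antisymm
    · rw [Ideal.span_pair_mul_span_pair, Ideal.span_le]
      have h7 : (7 : ↥OL28) ∈ Ideal.span {TT} :=
        seven_mem _ (Ideal.mem_span_singleton_self TT)
      rintro x (rfl | rfl | rfl | rfl)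
      · rw [hp]; exact h7
      · exact Ideal.mul_mem_left _ _ (Ideal.mem_span_singleton_self TT)
      · exact Ideal.mul_mem_right _ _ (Ideal.mem_span_singleton_self TT)
      · exact Ideal.mul_mem_right _ _ (Ideal.mem_span_singleton_self TT)
    · rw [Ideal.span_singleton_le_iff_mem]
      have m1 := Ideal.mul_mem_mul p1 q2
      have m2 := Ideal.mul_mem_mul p2 q1
      have : TT = 3 * ((3 + W) * TT) + (3 - 2 * (3 + W)) * (TT * (3 + W')) := by
        linear_combination TT * (2 * hp - 3 * h1)
      have m3 := Ideal.add_mem _ (Ideal.mul_mem_left _ 3 m1)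
        (Ideal.mul_mem_left _ (3 - 2 * (3 + W)) m2)
      rwa [← this] at m3
  obtain ⟨mP, cP⟩ := gen_field (Ideal.span {3 + W, TT}) tP
    ⟨-3, by convert p1 using 1; rw [hWdef]; push_cast; ring⟩ p2
  obtain ⟨mQ, cQ⟩ := gen_field (Ideal.span {3 + W', TT}) tQ
    ⟨2, by convert neg_mem q1 using 1; rw [hW'def]; push_cast; ring⟩ q2
  refine ⟨Ideal.span {3 + W, TT}, Ideal.span {3 + W', TT}, mP.isPrime, mQ.isPrime, ?_,
    seven_mem _ p2, seven_mem _ q2, ?_, cP, cQ, ?_, nP, nQ⟩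
  · intro h
    apply tP
    rw [Ideal.eq_top_iff_one]
    rw [← h] at q1
    have : (1 : ↥OL28) = 3 * (3 + W) + (3 - 2 * (3 + W)) * (3 + W') := by
      linear_combination 2 * hp - 3 * h1
    rw [this]
    exact Ideal.add_mem _ (Ideal.mul_mem_left _ _ p1) (Ideal.mul_mem_left _ _ q1)
  · intro R hR h7
    have hT : TT ∈ R := by
      apply hR.mem_of_pow_mem 6
      rw [TT_seven]
      exact R.mul_mem_right _ h7
    rw [← hp] at h7
    rcases hR.mem_or_mem h7 with h | h
    · left
      refine (mP.eq_of_le hR.ne_top ?_).symm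
      rw [Ideal.span_le]
      rintro x (rfl | rfl)
      exacts [h, hT]
    · right
      refine (mQ.eq_of_le hR.ne_top ?_).symm
      rw [Ideal.span_le]
      rintro x (rfl | rfl)
      exacts [h, hT]
  · rw [← mul_pow, hmul, Ideal.span_singleton_pow]
    apply le_antisymm
    · rw [Ideal.span_singleton_le_iff_mem, Ideal.mem_span_singleton]
      exact ⟨_, seven_TT⟩
    · rw [Ideal.span_singleton_le_iff_mem, Ideal.mem_span_singleton]
      exact ⟨_, TT_seven⟩
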